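/- arXiv:2507.11009 — 8 statements merged into one kernel-verified Lean document; each statement's English description precedes it below -/
import Mathlib

section
/- Let u be a positive integer with u dividing q−1. Then the l elements 1, ζ^u, ζ^{2u}, ..., ζ^{(l−1)u} of F are linearly independent over B; equivalently, rank_B({ζ^{ju} : 0 ≤ j ≤ l−1}) = l. -/
/-! If `x` has degree `m` over a field `B` with `q` elements, then `B[x]` has `q ^ m` elements, so
the order of `x` is less than `q ^ m`. Hence the powers `1, x, …, x ^ (l - 1)` are linearly
independent as soon as `x` has order at least `q ^ (l - 1)`. Passing from `ζ` to `ζ ^ u` divides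
the order by at most `u ≤ q - 1`, and a primitive `ζ` can afford this because
`(q - 1) * q ^ (l - 1) ≤ q ^ l - 1`. -/

theorem mul_pow_pred_le_pow_sub_one {q l u : ℕ} (hl : 0 < l) (huq : u < q) :
    u * q ^ (l - 1) ≤ q ^ l - 1 := by
  have hlt : u * q ^ (l - 1) < q ^ l := by
    rw [← mul_pow_sub_one hl.ne' q]
    exact Nat.mul_lt_mul_of_pos_right huq (Nat.pow_pos huq.pos)
  exact Nat.le_sub_one_of_lt hlt

theorem le_orderOf_pow_of_mul_le {G : Type*} [Monoid G] {x : G} {u n : ℕ} (hu : 0 < u)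
    (h : u * n ≤ orderOf x) : n ≤ orderOf (x ^ u) := by
  rw [orderOf_pow' x hu.ne', Nat.le_div_iff_mul_le (Nat.gcd_pos_of_pos_right _ hu), mul_comm]
  exact (Nat.mul_le_mul_right n (Nat.gcd_le_right _ hu)).trans h

theorem isIntegral_of_isOfFinOrder (R : Type*) {A : Type*} [CommRing R] [Ring A] [Algebra R A]
    {x : A} (hx : IsOfFinOrder x) : IsIntegral R x :=
  .of_pow hx.orderOf_pos (by rw [pow_orderOf_eq_one]; exact isIntegral_one)

theorem finrank_adjoin_singleton_eq_natDegree_minpoly (K : Type*) {A : Type*} [Field K] [Ring A]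
    [Algebra K A] (x : A) :
    Module.finrank K (Algebra.adjoin K {x}) = (minpoly K x).natDegree := by
  let φ : Polynomial K →ₐ[K] A := Polynomial.aeval x
  calc Module.finrank K (Algebra.adjoin K {x}) = Module.finrank K φ.range := by
        rw [Algebra.adjoin_singleton_eq_range_aeval]
    _ = Module.finrank K (Polynomial K ⧸ RingHom.ker φ) :=
        (Ideal.quotientKerEquivRange φ).toLinearEquiv.finrank_eq.symm
    _ = (minpoly K x).natDegree := by
        rw [minpoly.ker_aeval_eq_span_minpoly, finrank_quotient_span_eq_natDegree]

section FiniteBase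

variable {B A : Type*} [Field B] [Finite B] [Ring A] [Nontrivial A] [Algebra B A]

theorem orderOf_lt_natCard_pow_natDegree_minpoly (x : A) :
    orderOf x < Nat.card B ^ (minpoly B x).natDegree := by
  by_cases hx : IsOfFinOrder x
  · have : Module.Finite B (Algebra.adjoin B {x}) :=
      .of_fg (isIntegral_of_isOfFinOrder B hx).fg_adjoin_singleton
    have : Finite (Algebra.adjoin B {x}) := Module.finite_of_finite B
    let y : Algebra.adjoin B {x} := ⟨x, Algebra.self_mem_adjoin_singleton B x⟩
    calc orderOf x = orderOf y := orderOf_submonoid (H := (Algebra.adjoin B {x}).toSubmonoid) y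
      _ < Nat.card (Algebra.adjoin B {x}) := orderOf_lt_card y
      _ = Nat.card B ^ (minpoly B x).natDegree := by
        rw [Module.natCard_eq_pow_finrank (K := B), finrank_adjoin_singleton_eq_natDegree_minpoly]
  · rw [orderOf_eq_zero hx]
    exact Nat.pow_pos Nat.card_pos

theorem linearIndependent_pow_of_natCard_pow_le_orderOf {x : A} {l : ℕ}
    (h : Nat.card B ^ (l - 1) ≤ orderOf x) :
    LinearIndependent B fun j : Fin l => x ^ (j : ℕ) := by
  have hlt : l - 1 < (minpoly B x).natDegree :=
    (Nat.pow_lt_pow_iff_right Finite.one_lt_card).mp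
      (h.trans_lt (orderOf_lt_natCard_pow_natDegree_minpoly x))
  exact (linearIndependent_pow x).comp (Fin.castLE (Nat.le_of_pred_lt hlt))
    (Fin.castLE_injective _)

theorem stmt_0_general {ζ : A} {l u : ℕ} (hu : 0 < u)
    (hζ : u * Nat.card B ^ (l - 1) ≤ orderOf ζ) :
    Module.finrank B ↥(Submodule.span B {x : A | ∃ j < l, x = ζ ^ (j * u)}) = l := by
  have hli : LinearIndependent B fun j : Fin l => (ζ ^ u) ^ (j : ℕ) :=
    linearIndependent_pow_of_natCard_pow_le_orderOf (le_orderOf_pow_of_mul_le hu hζ)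
  have hrange : {x : A | ∃ j < l, x = ζ ^ (j * u)} =
      Set.range fun j : Fin l => (ζ ^ u) ^ (j : ℕ) := by
    ext x
    simp only [Set.mem_ofPred_eq, Set.mem_range, Fin.exists_iff, ← pow_mul, mul_comm u,
      exists_prop, eq_comm]
  rw [hrange, finrank_span_eq_card hli, Fintype.card_fin]

end FiniteBase

/-- Let `B = GF(q)`, `F = GF(q^l)` and `ζ` a primitive element of `F`
(i.e. of multiplicative order `q^l - 1`). If `u > 0` divides `q - 1`, then the `l`
elements `1, ζ^u, ζ^{2u}, …, ζ^{(l-1)u}` are linearly independent over `B`, i.e.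
`rank_B({ζ^{ju} : 0 ≤ j ≤ l-1}) = l`. -/
theorem stmt_0 (q l : ℕ) (hl : 0 < l)
    (B F : Type*) [Field B] [Field F] [Fintype B] [Fintype F] [Algebra B F]
    (hq : Fintype.card B = q) (hrk : Module.finrank B F = l)
    (ζ : F) (hζ : orderOf ζ = q ^ l - 1)
    (u : ℕ) (hu : 0 < u) (hdvd : u ∣ q - 1) :
    Module.finrank B ↥(Submodule.span B {x : F | ∃ j < l, x = ζ ^ (j * u)}) = l := by
  have hq1 : 1 < q := hq ▸ Fintype.one_lt_card
  have huq : u < q := Nat.lt_of_le_sub_one hq1.pos (Nat.le_of_dvd (Nat.sub_pos_of_lt hq1) hdvd)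
  apply stmt_0_general hu
  simpa only [hζ, Nat.card_eq_fintype_card, hq] using mul_pow_pred_le_pow_sub_one hl huq
end

section
/- Let u be a positive divisor of q−1. For every i ∈ {1, ..., n̄}, rank_B({ζ^{u(t + s·r̄^{i−1})} : t ∈ T_i, s ∈ {0, ..., r̄−1}}) = l; i.e., these l field elements form a basis of F over B. (This is the repair condition for the failed rack i in Construction 1, where the repair polynomials are g_{t,s}(x) = ζ^{ut} x^{us}.) -/
/-!
For `0 < u < q` the power `ζ ^ u` has order at least `(q ^ l - 1) / (q - 1) ≥ q ^ (l - 1)`, which is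
too large for the multiplicative group of a proper subfield of `F`, so `ζ ^ u` generates `F` over
`B` and its first `l` powers span `F`. Each exponent `m < l` has the form `t + s * r ^ (i - 1)` with
`t ∈ T_i` and `s < r`: take for `s` the `i`-th base-`r` digit of `m`, and replace it by `0` to
get `t`.
-/

open IntermediateField Module

theorem orderOf_dvd_natCard_sub_one {G : Type*} [GroupWithZero G] {x : G} (hx : x ≠ 0) :
    orderOf x ∣ Nat.card G - 1 := by
  rw [← Units.val_mk0 hx, orderOf_units, ← Nat.card_units]
  exact orderOf_dvd_natCard _

theorem orderOf_dvd_mul_orderOf_pow {M : Type*} [Monoid M] (x : M) (u : ℕ) :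
    orderOf x ∣ u * orderOf (x ^ u) :=
  orderOf_dvd_of_pow_eq_one <| by rw [pow_mul, pow_orderOf_eq_one]

theorem pow_le_orderOf_pow {M : Type*} [Monoid M] {x : M} {q k u : ℕ}
    (hx : q ^ (k + 1) - 1 ≤ orderOf x) (hu : 0 < u) (huq : u < q) :
    q ^ k ≤ orderOf (x ^ u) := by
  have hqk : 0 < q ^ k := Nat.pow_pos (by omega)
  have hpos : 0 < orderOf x :=
    (Nat.sub_pos_of_lt (Nat.one_lt_pow k.succ_ne_zero (by omega))).trans_le hx
  have hpos_pow : 0 < orderOf (x ^ u) := (orderOf_pos_iff.mp hpos).pow.orderOf_pos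
  refine Nat.le_of_mul_le_mul_left ?_ (Nat.sub_pos_of_lt (by omega : 1 < q))
  calc (q - 1) * q ^ k = q ^ (k + 1) - q ^ k := by rw [Nat.sub_mul, one_mul, pow_succ']
    _ ≤ orderOf x := by omega
    _ ≤ u * orderOf (x ^ u) := Nat.le_of_dvd (by positivity) (orderOf_dvd_mul_orderOf_pow x u)
    _ ≤ (q - 1) * orderOf (x ^ u) := by gcongr; omega

theorem adjoin_simple_eq_top_of_pow_le_orderOf {K L : Type*} [Field K] [Finite K] [Field L]
    [Algebra K L] [FiniteDimensional K L] {x : L}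
    (hx : Nat.card K ^ (finrank K L - 1) ≤ orderOf x) : K⟮x⟯ = ⊤ := by
  have : Finite K⟮x⟯ := Module.finite_of_finite K
  have hx₀ : x ≠ 0 := by
    rintro rfl
    simp [Nat.card_pos.ne'] at hx
  have hgen : AdjoinSimple.gen K x ≠ 0 := fun h => hx₀ (congrArg Subtype.val h)
  have hlt : Nat.card K ^ (finrank K L - 1) < Nat.card K ^ finrank K K⟮x⟯ := calc
    _ ≤ orderOf x := hx
    _ = orderOf (AdjoinSimple.gen K x) :=
      orderOf_injective K⟮x⟯.val.toMonoidHom Subtype.val_injective (AdjoinSimple.gen K x)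
    _ ≤ Nat.card K⟮x⟯ - 1 :=
      Nat.le_of_dvd (Nat.sub_pos_of_lt Finite.one_lt_card) (orderOf_dvd_natCard_sub_one hgen)
    _ < Nat.card K⟮x⟯ := Nat.sub_one_lt Nat.card_pos.ne'
    _ = Nat.card K ^ finrank K K⟮x⟯ := Module.natCard_eq_pow_finrank
  have := (Nat.pow_lt_pow_iff_right Finite.one_lt_card).mp hlt
  exact eq_of_le_of_finrank_le le_top (by rw [finrank_top']; omega)

theorem span_pow_eq_top_of_adjoin_simple_eq_top {K L : Type*} [Field K] [Field L] [Algebra K L]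
    [FiniteDimensional K L] {x : L} (hx : K⟮x⟯ = ⊤) :
    Submodule.span K (Set.range fun m : Fin (finrank K L) => x ^ (m : ℕ)) = ⊤ := by
  rw [Field.primitive_element_iff_minpoly_natDegree_eq] at hx
  rw [← hx]
  exact (linearIndependent_pow x).span_eq_top_of_card_eq_finrank' (by rw [Fintype.card_fin, hx])

theorem exists_div_mod_eq_zero_and_eq_add_mul {r : ℕ} (hr : 0 < r) (P m : ℕ) :
    ∃ t ≤ m, t / P % r = 0 ∧ ∃ s < r, m = t + s * P := by
  have hle : m / P % r * P ≤ m :=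
    (Nat.mul_le_mul_right P (Nat.mod_le _ _)).trans (Nat.div_mul_le_self m P)
  refine ⟨m - m / P % r * P, Nat.sub_le _ _, ?_, m / P % r, Nat.mod_lt _ hr,
    (Nat.sub_add_cancel hle).symm⟩
  rw [mul_comm, Nat.sub_mul_div]
  exact Nat.sub_mod_eq_zero_of_mod_eq (Nat.mod_mod _ _).symm

theorem span_pow_add_mul_eq_top {K L : Type*} [Field K] [Field L] [Algebra K L]
    [FiniteDimensional K L] {x : L} (hx : K⟮x⟯ = ⊤) {r : ℕ} (hr : 0 < r) (P : ℕ) :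
    Submodule.span K {y : L | ∃ t, (t < finrank K L ∧ t / P % r = 0) ∧
      ∃ s < r, y = x ^ (t + s * P)} = ⊤ := by
  rw [eq_top_iff, ← span_pow_eq_top_of_adjoin_simple_eq_top hx]
  refine Submodule.span_mono ?_
  rintro _ ⟨m, rfl⟩
  obtain ⟨t, htm, ht, s, hs, hm⟩ := exists_div_mod_eq_zero_and_eq_add_mul hr P m
  exact ⟨t, ⟨htm.trans_lt m.isLt, ht⟩, s, hs, congrArg (x ^ ·) hm⟩

theorem stmt_3_general {B F : Type*} [Field B] [Finite B] [Field F] [Algebra B F]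
    [FiniteDimensional B F] {ζ : F} (hζ : orderOf ζ = Nat.card B ^ finrank B F - 1)
    {u : ℕ} (hu : 0 < u) (huq : u < Nat.card B) {r : ℕ} (hr : 0 < r) (j : ℕ) :
    finrank B ↥(Submodule.span B
      {x : F | ∃ t, (t < finrank B F ∧ t / r ^ j % r = 0) ∧
        ∃ s < r, x = ζ ^ (u * (t + s * r ^ j))}) = finrank B F := by
  have horder : Nat.card B ^ (finrank B F - 1) ≤ orderOf (ζ ^ u) :=
    pow_le_orderOf_pow (by rw [hζ, Nat.sub_add_cancel finrank_pos]) hu huq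
  have hspan := span_pow_add_mul_eq_top (adjoin_simple_eq_top_of_pow_le_orderOf horder) hr (r ^ j)
  simp_rw [← pow_mul] at hspan
  rw [hspan, finrank_top]

/-- **repair condition of Construction 1.** Let `B = GF(q)`,
`l = r^n` (`n, r ≥ 2`), `F = GF(q^l)`, `ζ` a primitive element of `F`, and let
`u > 0` divide `q - 1`.  For `i ∈ {1, …, n}` and
`T_i = {t < l : (t / r^(i-1)) % r = 0}`, the `l` elements
`ζ^{u(t + s·r^(i-1))}` with `t ∈ T_i`, `s ∈ {0, …, r-1}` form a basis of `F`
over `B`, i.e. their `B`-rank is `l`. -/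
theorem stmt_3 (q n r l : ℕ) (hn : 2 ≤ n) (hr : 2 ≤ r) (hl : l = r ^ n)
    (B F : Type*) [Field B] [Field F] [Fintype B] [Fintype F] [Algebra B F]
    (hq : Fintype.card B = q) (hrk : Module.finrank B F = l)
    (ζ : F) (hζ : orderOf ζ = q ^ l - 1)
    (u : ℕ) (hu : 0 < u) (hdvd : u ∣ q - 1)
    (i : ℕ) (hi : i ∈ Finset.Icc 1 n) :
    Module.finrank B ↥(Submodule.span B
      {x : F | ∃ t, (t < l ∧ t / r ^ (i - 1) % r = 0) ∧
        ∃ s < r, x = ζ ^ (u * (t + s * r ^ (i - 1)))}) = l := by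
  subst hq hrk
  have hle : u ≤ Fintype.card B - 1 := Nat.le_of_dvd (Nat.sub_pos_of_lt Fintype.one_lt_card) hdvd
  rw [← Nat.card_eq_fintype_card] at hζ hle
  exact stmt_3_general hζ hu (by omega) (by omega) (i - 1)
end

section
/- Let u be a positive divisor of q−1 and fix i ∈ {1, ..., n̄}. For each e ∈ {1,...,n̄} \ {i}, let b_e = rank_B({ζ^{u(t + s·r̄^{e−1})} : t ∈ T_i, s ∈ {0, ..., r̄−1}}). Then the repair bandwidth b = Σ_{e ∈ {1,...,n̄}\{i}} b_e of the linear repair scheme of Construction 1 satisfies b < (n̄+1)·l/r̄. -/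
/-!
Shifting `N` consecutive naturals by `0, c, …, (r - 1) c` covers at most `N + (r - 1) c` values.
The numbers below `r ^ n` whose base-`r` digit at position `j` vanishes form a grid: the digits
above `j` and those below `j` range independently over `r ^ (n - j - 1)` and `r ^ j` consecutive
values. Adding `s * r ^ m` with `m ≠ j` moves along one side of this grid only, so the number of
exponents, which bounds the rank, grows by at most `(r - 1) r ^ m` times the other side. These
enlargements add up to a telescoping geometric sum.
-/

open Finset Module Submodule

lemma add_mul_lt_add_sub_one_mul {a s N r : ℕ} (ha : a < N) (hs : s < r) (c : ℕ) :
    a + s * c < N + (r - 1) * c :=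
  add_lt_add_of_lt_of_le ha (Nat.mul_le_mul_right c (Nat.le_sub_one_of_lt hs))

lemma sum_range_pow_add_sub_one_mul_pow {r : ℕ} (hr : 0 < r) (j : ℕ) :
    ∑ d ∈ range j, (r ^ j + (r - 1) * r ^ d) + 1 = (j + 1) * r ^ j := by
  have hgeom : (r - 1) * ∑ d ∈ range j, r ^ d + 1 = r ^ j := by
    simpa only [Nat.sub_one_add_one_eq_of_pos hr, mul_comm] using geom_sum_mul_add (r - 1) j
  rw [sum_add_distrib, sum_const, card_range, smul_eq_mul, ← mul_sum, add_assoc, hgeom, add_one_mul]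

lemma sum_range_erase_add {M : Type*} [AddCancelCommMonoid M] (f : ℕ → M) (j p : ℕ) :
    ∑ m ∈ (range (j + 1 + p)).erase j, f m =
      ∑ m ∈ range j, f m + ∑ d ∈ range p, f (j + 1 + d) := by
  have hj : j ∈ range (j + 1 + p) := mem_range.2 (by lia)
  rw [← add_right_cancel_iff (a := f j), sum_erase_add _ _ hj, sum_range_add, sum_range_succ,
    add_right_comm]

lemma sum_Icc_one_erase {M : Type*} [AddCommMonoid M] (f : ℕ → M) (n : ℕ) {i : ℕ} (hi : 1 ≤ i) :
    ∑ e ∈ (Icc 1 n).erase i, f (e - 1) = ∑ m ∈ (range n).erase (i - 1), f m :=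
  sum_nbij' (· - 1) (· + 1) (by grind) (by grind) (by grind) (by grind) (by grind)

/-- The set `T_i` of the paper for `i = j + 1`: digit positions are counted from `0` here, so that
`t / r ^ j % r` is the digit of `t` with weight `r ^ j`. -/
def zeroDigitNumbers (r n j : ℕ) : Finset ℕ :=
  {t ∈ range (r ^ n) | t / r ^ j % r = 0}

/-- The exponents `t + s * r ^ m` indexing the field elements whose rank is the number of symbols
downloaded from rack `m` to repair a node of rack `j`, both racks counted from `0`. The factor `u`
of the paper is left to the sequence to which these exponents are applied. -/
def helperExponents (r n j m : ℕ) : Finset ℕ :=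
  image₂ (fun t s ↦ t + s * r ^ m) (zeroDigitNumbers r n j) (range r)

section HelperExponents

variable (r j p : ℕ)

lemma zeroDigitNumbers_subset_grid :
    zeroDigitNumbers r (j + 1 + p) j ⊆
      image₂ (fun x a ↦ x * r ^ (j + 1) + a) (range (r ^ p)) (range (r ^ j)) := by
  intro t ht
  obtain ⟨ht, hdigit⟩ : t < r ^ (j + 1 + p) ∧ t / r ^ j % r = 0 := by
    simpa only [zeroDigitNumbers, mem_filter, mem_range] using ht
  have hr : 0 < r := Nat.pos_of_ne_zero (by rintro rfl; simp at ht)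
  have hhigh : t / r ^ (j + 1) < r ^ p := Nat.div_lt_of_lt_mul (by rwa [← pow_add])
  have hlow : t % r ^ j < r ^ j := Nat.mod_lt _ (pow_pos hr j)
  have hmod : t % r ^ (j + 1) = t % r ^ j := by
    rw [Nat.mod_pow_succ, hdigit, mul_zero, add_zero]
  refine mem_image₂.2 ⟨_, mem_range.2 hhigh, _, mem_range.2 hlow, ?_⟩
  rw [← hmod, Nat.div_add_mod']

lemma card_helperExponents_low_le (m : ℕ) :
    #(helperExponents r (j + 1 + p) j m) ≤ r ^ p * (r ^ j + (r - 1) * r ^ m) := by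
  have hgrid : helperExponents r (j + 1 + p) j m ⊆
      image₂ (fun x a ↦ x * r ^ (j + 1) + a)
        (range (r ^ p)) (range (r ^ j + (r - 1) * r ^ m)) := by
    refine image₂_subset_iff.2 fun t ht s hs ↦ ?_
    obtain ⟨x, hx, a, ha, rfl⟩ := mem_image₂.1 (zeroDigitNumbers_subset_grid r j p ht)
    have hshift := add_mul_lt_add_sub_one_mul (mem_range.1 ha) (mem_range.1 hs) (r ^ m)
    exact mem_image₂.2 ⟨x, hx, a + s * r ^ m, mem_range.2 hshift, (add_assoc ..).symm⟩
  simpa only [card_range] using (card_le_card hgrid).trans (card_image₂_le _ _ _)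

lemma card_helperExponents_high_le (d : ℕ) :
    #(helperExponents r (j + 1 + p) j (j + 1 + d)) ≤ (r ^ p + (r - 1) * r ^ d) * r ^ j := by
  have hgrid : helperExponents r (j + 1 + p) j (j + 1 + d) ⊆
      image₂ (fun x a ↦ x * r ^ (j + 1) + a)
        (range (r ^ p + (r - 1) * r ^ d)) (range (r ^ j)) := by
    refine image₂_subset_iff.2 fun t ht s hs ↦ ?_
    obtain ⟨x, hx, a, ha, rfl⟩ := mem_image₂.1 (zeroDigitNumbers_subset_grid r j p ht)
    have hshift := add_mul_lt_add_sub_one_mul (mem_range.1 hx) (mem_range.1 hs) (r ^ d)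
    exact mem_image₂.2 ⟨x + s * r ^ d, mem_range.2 hshift, a, ha, by ring⟩
  simpa only [card_range] using (card_le_card hgrid).trans (card_image₂_le _ _ _)

variable {r} in
lemma sum_card_helperExponents_add_le (hr : 0 < r) :
    ∑ m ∈ (range (j + 1 + p)).erase j, #(helperExponents r (j + 1 + p) j m) + (r ^ p + r ^ j) ≤
      (j + 1 + p + 1) * r ^ (j + p) := by
  rw [sum_range_erase_add]
  calc _ ≤ ∑ m ∈ range j, r ^ p * (r ^ j + (r - 1) * r ^ m) +
          ∑ d ∈ range p, (r ^ p + (r - 1) * r ^ d) * r ^ j + (r ^ p + r ^ j) := by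
        gcongr
        · exact card_helperExponents_low_le r j p _
        · exact card_helperExponents_high_le r j p _
    _ = r ^ p * (∑ m ∈ range j, (r ^ j + (r - 1) * r ^ m) + 1) +
          (∑ d ∈ range p, (r ^ p + (r - 1) * r ^ d) + 1) * r ^ j := by
        rw [← mul_sum, ← sum_mul]
        ring
    _ = (j + 1 + p + 1) * r ^ (j + p) := by
        rw [sum_range_pow_add_sub_one_mul_pow hr, sum_range_pow_add_sub_one_mul_pow hr]
        ring

end HelperExponents

lemma sum_card_helperExponents_mul_lt {r n j : ℕ} (hr : 0 < r) (hj : j < n) :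
    (∑ m ∈ (range n).erase j, #(helperExponents r n j m)) * r < (n + 1) * r ^ n := by
  obtain ⟨p, rfl⟩ := Nat.exists_eq_add_of_le (Nat.succ_le_of_lt hj)
  have hbound := sum_card_helperExponents_add_le j p hr
  have hpos : 0 < r ^ p + r ^ j := by positivity
  calc _ < (j + 1 + p + 1) * r ^ (j + p) * r := Nat.mul_lt_mul_of_pos_right (by lia) hr
    _ = (j + 1 + p + 1) * r ^ (j + 1 + p) := by ring

section Rank

variable {R M : Type*} [Semiring R] [StrongRankCondition R] [AddCommMonoid M] [Module R M]

lemma finrank_span_image_finset_le_card {ι : Type*} (v : ι → M) (s : Finset ι) :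
    finrank R (span R (v '' s)) ≤ #s := by
  classical
  rw [← coe_image]
  exact (finrank_span_finset_le_card _).trans card_image_le

lemma finrank_span_helperExponents_le (v : ℕ → M) (r n j m : ℕ) :
    finrank R (span R {x : M | ∃ t, (t < r ^ n ∧ t / r ^ j % r = 0) ∧
      ∃ s < r, x = v (t + s * r ^ m)}) ≤ #(helperExponents r n j m) := by
  have himage : {x : M | ∃ t, (t < r ^ n ∧ t / r ^ j % r = 0) ∧
      ∃ s < r, x = v (t + s * r ^ m)} = v '' helperExponents r n j m := by
    ext x
    simp [helperExponents, zeroDigitNumbers, and_assoc, eq_comm]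
  rw [himage]
  exact finrank_span_image_finset_le_card v _

theorem stmt_4_general (v : ℕ → M) {r n i : ℕ} (hr : 0 < r) (hi : i ∈ Icc 1 n) :
    ((∑ e ∈ (Icc 1 n).erase i,
        finrank R (span R {x : M | ∃ t, (t < r ^ n ∧ t / r ^ (i - 1) % r = 0) ∧
          ∃ s < r, x = v (t + s * r ^ (e - 1))}) : ℕ) : ℝ)
      < (n + 1) * (r ^ n : ℕ) / r := by
  obtain ⟨hi₁, hin⟩ := mem_Icc.1 hi
  have hrank := sum_le_sum fun e (_ : e ∈ (Icc 1 n).erase i) ↦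
    finrank_span_helperExponents_le (R := R) v r n (i - 1) (e - 1)
  rw [sum_Icc_one_erase (fun m ↦ #(helperExponents r n (i - 1) m)) n hi₁] at hrank
  have hcard := sum_card_helperExponents_mul_lt (n := n) (j := i - 1) hr (by lia)
  rw [lt_div_iff₀ (Nat.cast_pos.2 hr)]
  exact_mod_cast (Nat.mul_le_mul_right r hrank).trans_lt hcard

end Rank

/-- **Theorem 8: repair bandwidth of Construction 1.** Let
`B = GF(q)`, `l = r^n` (`n, r ≥ 2`), `F = GF(q^l)`, `ζ` a primitive element of
`F`, `u > 0` a divisor of `q - 1`, and fix a host rack `i ∈ {1, …, n}` with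
`T_i = {t < l : (t / r^(i-1)) % r = 0}`.  For every helper rack `e ≠ i` let
`b_e = rank_B({ζ^{u(t + s·r^(e-1))} : t ∈ T_i, s ∈ {0, …, r-1}})`.  Then the
repair bandwidth `b = Σ_{e ≠ i} b_e` satisfies `b < (n+1)·l/r`. -/
theorem stmt_4 (q n r l : ℕ) (hn : 2 ≤ n) (hr : 2 ≤ r) (hl : l = r ^ n)
    (B F : Type*) [Field B] [Field F] [Fintype B] [Fintype F] [Algebra B F]
    (hq : Fintype.card B = q) (hrk : Module.finrank B F = l)
    (ζ : F) (hζ : orderOf ζ = q ^ l - 1)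
    (u : ℕ) (hu : 0 < u) (hdvd : u ∣ q - 1)
    (i : ℕ) (hi : i ∈ Finset.Icc 1 n) :
    ((∑ e ∈ (Finset.Icc 1 n).erase i,
        Module.finrank B ↥(Submodule.span B
          {x : F | ∃ t, (t < l ∧ t / r ^ (i - 1) % r = 0) ∧
            ∃ s < r, x = ζ ^ (u * (t + s * r ^ (e - 1)))}) : ℕ) : ℝ)
      < (n + 1) * l / r := by
  subst hl
  exact stmt_4_general (fun k ↦ ζ ^ (u * k)) (by lia) hi
end

section
/- Let u be a positive divisor of q−1, and let i, e ∈ {1, ..., n̄} with e > i. Then rank_B({ζ^{u(t + s·r̄^{e−1})} : t ∈ T_i, s ∈ {0, ..., r̄−1}}) ≤ l/r̄ + (r̄−1)·l/r̄^{n̄−e+2}. -/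
/-!
Adding a multiple of `r ^ (e - 1)` to `t` leaves the digits of `t` below place `e` unchanged. Hence
all exponents `t + s * r ^ (e - 1)` lie below `r ^ n + (r - 1) * r ^ (e - 1)` and share the `i`-th
digit. This bound is a multiple of `r ^ i`, so exactly one in `r` of the numbers below it has a
prescribed `i`-th digit, and the rank is at most the number of possible exponents, which is
`r ^ (n - 1) + (r - 1) * r ^ (e - 2)`.
-/

open Finset

theorem add_mul_pow_div_pow_mod (r t s : ℕ) {a b : ℕ} (hab : a < b) :
    (t + s * r ^ b) / r ^ a % r = t / r ^ a % r := by
  have hdvd : r ^ a * r ∣ s * r ^ b :=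
    pow_succ r a ▸ Dvd.dvd.mul_left (pow_dvd_pow r hab) s
  rw [← Nat.mod_mul_right_div_self, ← Nat.mod_mul_right_div_self, Nat.add_mod,
    Nat.mod_eq_zero_of_dvd hdvd, add_zero, Nat.mod_mod]

theorem card_filter_range_div_mod_eq (p K : ℕ) {r d : ℕ} (hd : d < r) :
    #{m ∈ range (p * r * K) | m / p % r = d} = p * K := by
  obtain rfl | hp := p.eq_zero_or_pos
  · simp
  have hr : 0 < r := Nat.zero_lt_of_lt hd
  suffices #{m ∈ range (p * r * K) | m / p % r = d} = #(range p ×ˢ range K) by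
    rwa [card_product, card_range, card_range] at this
  refine card_nbij' (fun m => (m % p, m / p / r)) (fun z => z.1 + p * (d + r * z.2)) ?_ ?_ ?_ ?_
  · intro m hm
    simp only [coe_filter, mem_range, Set.mem_ofPred_eq] at hm
    simp only [coe_product, coe_range, Set.mem_prod, Set.mem_Iio]
    exact ⟨Nat.mod_lt m hp, Nat.div_div_eq_div_mul m p r ▸ Nat.div_lt_of_lt_mul hm.1⟩
  · rintro ⟨b, a⟩ hz
    simp only [coe_product, coe_range, Set.mem_prod, Set.mem_Iio] at hz
    obtain ⟨hb, ha⟩ := hz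
    simp only [coe_filter, mem_range, Set.mem_ofPred_eq]
    constructor
    · calc b + p * (d + r * a) < p + p * (d + r * a) := by gcongr
        _ = p * (d + 1 + r * a) := by ring
        _ ≤ p * (r + r * a) := by gcongr; exact hd
        _ = p * r * (a + 1) := by ring
        _ ≤ p * r * K := by gcongr; exact ha
    · rw [Nat.add_mul_div_left _ _ hp, Nat.div_eq_of_lt hb, zero_add, Nat.add_mul_mod_self_left,
        Nat.mod_eq_of_lt hd]
  · intro m hm
    simp only [coe_filter, mem_range, Set.mem_ofPred_eq] at hm
    simp only [← hm.2, Nat.mod_add_div]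
  · rintro ⟨b, a⟩ hz
    simp only [coe_product, coe_range, Set.mem_prod, Set.mem_Iio] at hz
    simp [Nat.add_mul_div_left _ _ hp, Nat.add_mul_div_left _ _ hr, Nat.div_eq_of_lt hz.1,
      Nat.mod_eq_of_lt hz.1, Nat.div_eq_of_lt hd]

section Span

variable {R M : Type*} [Ring R] [StrongRankCondition R] [AddCommGroup M] [Module R M]

theorem finrank_span_le_card_of_subset_image {ι : Type*} (v : ι → M) (A : Finset ι) {S : Set M}
    (hS : S ⊆ v '' A) : Module.finrank R (Submodule.span R S) ≤ #A := by
  classical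
  rw [← coe_image] at hS
  have := Module.Finite.span_finset R (A.image v)
  calc Module.finrank R (Submodule.span R S)
      ≤ Module.finrank R (Submodule.span R (A.image v : Set M)) :=
        Submodule.finrank_mono (Submodule.span_mono hS)
    _ ≤ #(A.image v) := finrank_span_finset_le_card _
    _ ≤ #A := card_image_le

theorem finrank_span_digit_shifts_le (v : ℕ → M) {r d a b n : ℕ} (hd : d < r)
    (hab : a ≤ b) (han : a ≤ n) :
    Module.finrank R (Submodule.span R
        {x : M | ∃ t, (t < r ^ (n + 1) ∧ t / r ^ a % r = d) ∧
          ∃ s < r, x = v (t + s * r ^ (b + 1))})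
      ≤ r ^ n + (r - 1) * r ^ b := by
  obtain ⟨j, rfl⟩ := Nat.exists_eq_add_of_le hab
  obtain ⟨k, rfl⟩ := Nat.exists_eq_add_of_le han
  have hcard := card_filter_range_div_mod_eq (r ^ a) (r ^ k + (r - 1) * r ^ j) hd
  refine (finrank_span_le_card_of_subset_image v
    {m ∈ range (r ^ a * r * (r ^ k + (r - 1) * r ^ j)) | m / r ^ a % r = d} ?_).trans
    (le_of_eq (hcard.trans (by ring)))
  rintro _ ⟨t, ⟨ht, htd⟩, s, hs, rfl⟩
  refine ⟨t + s * r ^ (a + j + 1), ?_, rfl⟩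
  simp only [coe_filter, mem_range, Set.mem_ofPred_eq]
  constructor
  · calc t + s * r ^ (a + j + 1) < r ^ (a + k + 1) + (r - 1) * r ^ (a + j + 1) :=
          add_lt_add_of_lt_of_le ht (Nat.mul_le_mul_right _ (Nat.le_sub_one_of_lt hs))
      _ = r ^ a * r * (r ^ k + (r - 1) * r ^ j) := by ring
  · rw [add_mul_pow_div_pow_mod r t s (by omega), htd]

theorem stmt_6_general (v : ℕ → M) {r n i e d : ℕ} (hd : d < r)
    (hi : 1 ≤ i) (hie : i < e) (hen : e ≤ n) :
    (Module.finrank R (Submodule.span R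
        {x : M | ∃ t, (t < r ^ n ∧ t / r ^ (i - 1) % r = d) ∧
          ∃ s < r, x = v (t + s * r ^ (e - 1))}) : ℝ)
      ≤ (r : ℝ) ^ n / r + ((r : ℝ) - 1) * (r : ℝ) ^ n / (r : ℝ) ^ (n - e + 2) := by
  obtain ⟨a, rfl⟩ : ∃ a, i = a + 1 := ⟨i - 1, by omega⟩
  obtain ⟨b, rfl⟩ : ∃ b, e = b + 2 := ⟨e - 2, by omega⟩
  obtain ⟨c, rfl⟩ : ∃ c, n = b + 1 + c + 1 := ⟨n - (b + 2), by omega⟩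
  have hr : 0 < r := Nat.zero_lt_of_lt hd
  have hexp : b + 1 + c + 1 - (b + 2) + 2 = c + 2 := by omega
  rw [hexp]
  calc _ ≤ ((r ^ (b + 1 + c) + (r - 1) * r ^ b : ℕ) : ℝ) :=
        Nat.cast_le.2 (finrank_span_digit_shifts_le v hd (by omega) (by omega))
    _ = (r : ℝ) ^ (b + 1 + c + 1) / r +
          ((r : ℝ) - 1) * (r : ℝ) ^ (b + 1 + c + 1) / (r : ℝ) ^ (c + 2) := by
        rw [Nat.cast_add, Nat.cast_mul, Nat.cast_pred hr, Nat.cast_pow, Nat.cast_pow]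
        field_simp
        ring

end Span

/-- In the setting of Construction 1 (`B = GF(q)`, `l = r^n`,
`F = GF(q^l)`, `ζ` primitive in `F`, `u > 0` a divisor of `q-1`,
`T_i = {t < l : (t / r^(i-1)) % r = 0}`), if `e > i` (both in `{1, …, n}`) then
`rank_B({ζ^{u(t + s·r^(e-1))} : t ∈ T_i, s ∈ {0,…,r-1}}) ≤ l/r + (r-1)·l/r^(n-e+2)`. -/
theorem stmt_6 (q n r l : ℕ) (hn : 2 ≤ n) (hr : 2 ≤ r) (hl : l = r ^ n)
    (B F : Type*) [Field B] [Field F] [Fintype B] [Fintype F] [Algebra B F]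
    (hq : Fintype.card B = q) (hrk : Module.finrank B F = l)
    (ζ : F) (hζ : orderOf ζ = q ^ l - 1)
    (u : ℕ) (hu : 0 < u) (hdvd : u ∣ q - 1)
    (i e : ℕ) (hi : i ∈ Finset.Icc 1 n) (he : e ∈ Finset.Icc 1 n) (hei : e > i) :
    ((Module.finrank B ↥(Submodule.span B
        {x : F | ∃ t, (t < l ∧ t / r ^ (i - 1) % r = 0) ∧
          ∃ s < r, x = ζ ^ (u * (t + s * r ^ (e - 1)))}) : ℕ) : ℝ)
      ≤ (l : ℝ) / r + ((r : ℝ) - 1) * l / r ^ (n - e + 2) := by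
  rw [hl, Nat.cast_pow]
  exact stmt_6_general (fun m => ζ ^ (u * m)) (Nat.zero_lt_of_lt hr)
    (Finset.mem_Icc.1 hi).1 hei (Finset.mem_Icc.1 he).2
end

section
/- Let u be a positive integer with u dividing q−1 and α ∈ B an element of multiplicative order exactly u. Then the n̄·u field elements α_{i,j} = ζ^{r̄^{i−1}} · α^j, for i ∈ {1, ..., n̄} and j ∈ {1, ..., u}, are pairwise distinct (so the evaluation-point sets A_1, ..., A_{n̄} of Construction 1 are pairwise disjoint). -/
/-!
Let `q = |B|`. Raising `ζ ^ a * α ^ j = ζ ^ b * α ^ k` to the power `orderOf α ≤ q - 1` removes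
`α`. If `a, b < l`, then the surviving exponents of `ζ` are less than `l * (q - 1)`, which by
Bernoulli's inequality is at most `q ^ l - 1`, the order of `ζ`, so `a = b`. Cancelling the power
of `ζ` then leaves `α ^ j = α ^ k`.
-/

theorem mul_sub_one_le_pow_sub_one (q l : ℕ) : l * (q - 1) ≤ q ^ l - 1 := by
  obtain rfl | hq := Nat.eq_zero_or_pos q
  · simp
  · obtain ⟨d, rfl⟩ := Nat.exists_eq_add_of_le hq
    have bernoulli : 1 + l * d ≤ (1 + d) ^ l :=
      one_add_le_pow_of_two_add_nonneg (Nat.zero_le _) l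
    rw [Nat.add_sub_cancel_left]
    exact Nat.le_sub_of_add_le' bernoulli

theorem injOn_pow_sub_one {r : ℕ} (hr : 2 ≤ r) : Set.InjOn (fun i => r ^ (i - 1)) (Set.Ici 1) :=
  (Nat.pow_right_injective hr).comp_injOn fun _ hi _ hj => Nat.pred_inj hi hj

section Monoid

variable {M : Type*} [Monoid M]

theorem pow_injOn_Icc_one_orderOf (x : M) :
    Set.InjOn (fun j : ℕ => x ^ j) (Set.Icc 1 (orderOf x)) := by
  rintro i ⟨hi, hi'⟩ j ⟨hj, hj'⟩ (hij : x ^ i = x ^ j)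
  have hx : IsOfFinOrder x := orderOf_pos_iff.mp (hi.trans hi')
  have hpred : x ^ (i - 1) = x ^ (j - 1) := hx.isUnit.mul_left_cancel <| by
    rw [mul_pow_sub_one (Nat.ne_zero_of_lt hi), hij, mul_pow_sub_one (Nat.ne_zero_of_lt hj)]
  exact Nat.pred_inj hi hj <|
    pow_injOn_Iio_orderOf (Nat.sub_one_lt_of_le hi hi') (Nat.sub_one_lt_of_le hj hj') hpred

theorem eq_of_pow_mul_pow_eq_of_mul_orderOf_lt {x y : M} (hxy : Commute x y) {a b j k : ℕ}
    (hy : IsOfFinOrder y) (ha : a * orderOf y < orderOf x) (hb : b * orderOf y < orderOf x)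
    (h : x ^ a * y ^ j = x ^ b * y ^ k) : a = b := by
  have pow_mul_pow_orderOf (c m : ℕ) : (x ^ c * y ^ m) ^ orderOf y = x ^ (c * orderOf y) := by
    rw [(hxy.pow_pow c m).mul_pow, ← pow_mul, pow_right_comm, pow_orderOf_eq_one, one_pow, mul_one]
  have hpow : x ^ (a * orderOf y) = x ^ (b * orderOf y) := by
    rw [← pow_mul_pow_orderOf a j, h, pow_mul_pow_orderOf]
  exact Nat.eq_of_mul_eq_mul_right hy.orderOf_pos (pow_injOn_Iio_orderOf ha hb hpow)

theorem injOn_pow_mul_pow_of_mul_orderOf_lt {ι : Type*} {x y : M} (hxy : Commute x y)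
    {e : ι → ℕ} {s : Set ι} (he : s.InjOn e) (hlt : ∀ i ∈ s, e i * orderOf y < orderOf x) :
    Set.InjOn (fun p : ι × ℕ => x ^ e p.1 * y ^ p.2) (s ×ˢ Set.Icc 1 (orderOf y)) := by
  rintro ⟨i, j⟩ ⟨hi, hj⟩ ⟨i', k⟩ ⟨hi', hk⟩ h
  have hy : IsOfFinOrder y := orderOf_pos_iff.mp (hj.1.trans hj.2)
  have hx : IsOfFinOrder x := orderOf_pos_iff.mp (Nat.zero_lt_of_lt (hlt i hi))
  obtain rfl : i = i' :=
    he hi hi' (eq_of_pow_mul_pow_eq_of_mul_orderOf_lt hxy hy (hlt i hi) (hlt i' hi') h)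
  have hpow : y ^ j = y ^ k := (hx.isUnit.pow (e i)).mul_left_cancel h
  exact congrArg (Prod.mk i) (pow_injOn_Icc_one_orderOf y hj hk hpow)

end Monoid

theorem orderOf_le_card_sub_one {G₀ : Type*} [GroupWithZero G₀] [Fintype G₀] {a : G₀} (ha : a ≠ 0) :
    orderOf a ≤ Fintype.card G₀ - 1 :=
  orderOf_le_of_pow_eq_one (Nat.sub_pos_of_lt Fintype.one_lt_card)
    (FiniteField.pow_card_sub_one_eq_one a ha)

theorem stmt_7_general {ι B F : Type*} [Field B] [Fintype B] [Semiring F] [Nontrivial F]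
    [Algebra B F] {l : ℕ} {ζ : F} (hζ : orderOf ζ = Fintype.card B ^ l - 1) {α : B} (hα : α ≠ 0)
    {e : ι → ℕ} {s : Set ι} (he : s.InjOn e) (hel : ∀ i ∈ s, e i < l) :
    Set.InjOn (fun p : ι × ℕ => ζ ^ e p.1 * algebraMap B F α ^ p.2)
      (s ×ˢ Set.Icc 1 (orderOf α)) := by
  have horder : orderOf (algebraMap B F α) = orderOf α :=
    orderOf_injective (algebraMap B F : B →* F) (algebraMap B F).injective α
  rw [← horder]
  refine injOn_pow_mul_pow_of_mul_orderOf_lt (Algebra.commute_algebraMap_right α ζ) he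
    fun i hi => ?_
  calc e i * orderOf (algebraMap B F α)
    _ ≤ e i * (Fintype.card B - 1) :=
      Nat.mul_le_mul_left _ (horder.trans_le (orderOf_le_card_sub_one hα))
    _ < l * (Fintype.card B - 1) :=
      Nat.mul_lt_mul_of_pos_right (hel i hi) (Nat.sub_pos_of_lt Fintype.one_lt_card)
    _ ≤ Fintype.card B ^ l - 1 := mul_sub_one_le_pow_sub_one _ l
    _ = orderOf ζ := hζ.symm

/-- **evaluation points of Construction 1 are distinct.** Let
`B = GF(q)`, `l = r^n` (`n, r ≥ 2`), `F = GF(q^l)`, `ζ` a primitive element of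
`F`, `u > 0` a divisor of `q - 1`, and `α ∈ B` of multiplicative order exactly
`u`.  Then the `n·u` elements `α_{i,j} = ζ^{r^(i-1)} · α^j` for
`i ∈ {1, …, n}`, `j ∈ {1, …, u}` are pairwise distinct. -/
theorem stmt_7 (q n r l : ℕ) (hn : 2 ≤ n) (hr : 2 ≤ r) (hl : l = r ^ n)
    (B F : Type*) [Field B] [Field F] [Fintype B] [Fintype F] [Algebra B F]
    (hq : Fintype.card B = q) (hrk : Module.finrank B F = l)
    (ζ : F) (hζ : orderOf ζ = q ^ l - 1)
    (u : ℕ) (hu : 0 < u) (hdvd : u ∣ q - 1)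
    (α : B) (hα : orderOf α = u) :
    Set.InjOn (fun ij : ℕ × ℕ => ζ ^ r ^ (ij.1 - 1) * (algebraMap B F α) ^ ij.2)
      (↑(Finset.Icc 1 n ×ˢ Finset.Icc 1 u) : Set (ℕ × ℕ)) := by
  subst hq hl hα
  have hα0 : α ≠ 0 := by
    rintro rfl
    exact hu.ne' (orderOf_zero B)
  have hlt : ∀ i ∈ Set.Icc 1 n, r ^ (i - 1) < r ^ n := fun i hi =>
    Nat.pow_lt_pow_right hr (Nat.sub_one_lt_of_le hi.1 hi.2)
  simpa only [Finset.coe_product, Finset.coe_Icc] using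
    stmt_7_general hζ hα0 ((injOn_pow_sub_one hr).mono Set.Icc_subset_Ici_self) hlt
end

section
/- Let u be a positive divisor of q−1. For every w ∈ {0, ..., n'−2} and every y ∈ {1, ..., m}, rank_B({ζ^{u(t + s·d_{w,y})} : t ∈ T_{w,y}, s ∈ {0, ..., r̄−1}}) = l; i.e., these l field elements form a basis of F over B. -/
/-- `∏_{j=1}^{y-1} p_j` (the empty product is `1`). -/
def bigP (p : ℕ → ℕ) (y : ℕ) : ℕ := ∏ j ∈ Finset.Icc 1 (y - 1), p j

/-- `d_{w,y} = r^w · ∏_{j=1}^{y-1} p_j`. -/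
def dwy (p : ℕ → ℕ) (r w y : ℕ) : ℕ := r ^ w * bigP p y

/-- The digit of `t` at position `pos = w·m + y` (`1 ≤ y ≤ m`) in the multi-base
expansion `t = Σ_{w,y} t_{wm+y} · d_{w,y}`, namely `(t / d_{w,y}) % p_y`. -/
def digit (p : ℕ → ℕ) (m r t pos : ℕ) : ℕ :=
  t / dwy p r ((pos - 1) / m) ((pos - 1) % m + 1) % p ((pos - 1) % m + 1)

/-!
Let `q` be the cardinality of `B`. If `ζ ^ u` with `u ≤ q` lay in a proper intermediate field with
`c ≥ q` elements, then `ζ ^ (u * (c - 1)) = 1` although `u * (c - 1) < c ^ 2 - 1 ≤ q ^ l - 1`. So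
`ζ ^ u` generates `F` and its first `l` powers span `F` over `B`.

It remains to write every exponent `n` as `t + s * d_{w,y}`. The place values of the multi-base
expansion are the partial products of the `m`-periodic sequence of bases, and any `m` consecutive
bases multiply to `r`. Subtracting `s * d_{w,y}` with `s = (n / d_{w,y}) % r` makes the quotient by
`d_{w,y}` a multiple of `r`, so the digits at the `m` positions from `w * m + y` on vanish.
-/

theorem ne_zero_of_orderOf_eq_natCard_sub_one {M₀ : Type*} [MonoidWithZero M₀] [Nontrivial M₀]
    [Finite M₀] {ζ : M₀} (hζ : orderOf ζ = Nat.card M₀ - 1) : ζ ≠ 0 := by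
  rintro rfl
  have hcard : 1 < Nat.card M₀ := Finite.one_lt_card
  rw [orderOf_zero] at hζ
  omega

theorem pow_natCard_sub_one_eq_one {G₀ : Type*} [GroupWithZero G₀] {x : G₀} (hx : x ≠ 0) :
    x ^ (Nat.card G₀ - 1) = 1 := by
  rw [← Nat.card_units, ← Units.val_mk0 hx, ← Units.val_pow_eq_pow_val, pow_card_eq_one',
    Units.val_one]

section PrimitivePower

variable {B F : Type*} [Field B] [Field F] [Algebra B F]

theorem finrank_eq_one_of_primitive_pow_mem_range [Finite F] {ζ : F}
    (hζ : orderOf ζ = Nat.card F - 1) {u : ℕ} (hu : 0 < u) (huB : u ≤ Nat.card B)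
    (hmem : ζ ^ u ∈ (algebraMap B F).range) : Module.finrank B F = 1 := by
  have : Finite B := Finite.of_injective _ (algebraMap B F).injective
  obtain ⟨x, hx⟩ := hmem
  have hx0 : x ≠ 0 := by
    rintro rfl
    exact pow_ne_zero u (ne_zero_of_orderOf_eq_natCard_sub_one hζ) (by rw [← hx, map_zero])
  have hone : ζ ^ (u * (Nat.card B - 1)) = 1 := by
    rw [pow_mul, ← hx, ← map_pow, pow_natCard_sub_one_eq_one hx0, map_one]
  have hB : 1 < Nat.card B := Finite.one_lt_card
  have horder : Nat.card F - 1 ≤ u * (Nat.card B - 1) :=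
    hζ ▸ orderOf_le_of_pow_eq_one (Nat.mul_pos hu (Nat.sub_pos_of_lt hB)) hone
  by_contra hne
  have hfinrank : 2 ≤ Module.finrank B F := by
    have := Module.finrank_pos (R := B) (M := F)
    omega
  have hsq : Nat.card B ^ 2 ≤ Nat.card F := by
    rw [Module.natCard_eq_pow_finrank (K := B) (V := F)]
    exact Nat.pow_le_pow_right hB.le hfinrank
  have hlt : u * (Nat.card B - 1) < Nat.card B ^ 2 - 1 := by
    calc u * (Nat.card B - 1) ≤ Nat.card B * (Nat.card B - 1) := Nat.mul_le_mul_right _ huB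
      _ < (Nat.card B + 1) * (Nat.card B - 1) :=
        Nat.mul_lt_mul_of_pos_right (Nat.lt_succ_self _) (Nat.sub_pos_of_lt hB)
      _ = Nat.card B ^ 2 - 1 := by rw [← Nat.sq_sub_sq, one_pow]
  omega

open IntermediateField

theorem adjoin_primitive_pow_eq_top [Finite F] {ζ : F} (hζ : orderOf ζ = Nat.card F - 1)
    {u : ℕ} (hu : 0 < u) (huB : u ≤ Nat.card B) : B⟮ζ ^ u⟯ = ⊤ := by
  have hcard : Nat.card B ≤ Nat.card B⟮ζ ^ u⟯ :=
    Nat.card_le_card_of_injective _ (algebraMap B B⟮ζ ^ u⟯).injective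
  rw [← finrank_eq_one_iff_eq_top]
  exact finrank_eq_one_of_primitive_pow_mem_range hζ hu (huB.trans hcard)
    ⟨AdjoinSimple.gen B (ζ ^ u), AdjoinSimple.algebraMap_gen B (ζ ^ u)⟩

theorem span_pow_lt_finrank_eq_top [FiniteDimensional B F] {α : F} (hα : B⟮α⟯ = ⊤) :
    Submodule.span B ((α ^ ·) '' Set.Iio (Module.finrank B F)) = ⊤ := by
  have hdeg := (Field.primitive_element_iff_minpoly_natDegree_eq B α).1 hα
  have hpow : LinearIndependent B fun i : Fin (Module.finrank B F) => α ^ (i : ℕ) :=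
    hdeg ▸ linearIndependent_pow α
  refine top_unique ?_
  rw [← hpow.span_eq_top_of_card_eq_finrank' (Fintype.card_fin _)]
  refine Submodule.span_mono ?_
  rintro _ ⟨i, rfl⟩
  exact Set.mem_image_of_mem _ i.isLt

end PrimitivePower

section MultiBaseExpansion

theorem exists_add_mul_eq_and_dvd_div {r : ℕ} (hr : 0 < r) (d n : ℕ) :
    ∃ t s, t + s * d = n ∧ s < r ∧ r ∣ t / d := by
  have hle : d * (n / d % r) ≤ n :=
    (Nat.mul_le_mul_left d (Nat.mod_le _ _)).trans (Nat.mul_div_le n d)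
  refine ⟨n - d * (n / d % r), n / d % r, ?_, Nat.mod_lt _ hr, ?_⟩
  · rw [mul_comm _ d, Nat.sub_add_cancel hle]
  · rw [Nat.sub_mul_div]
    exact Nat.dvd_sub_mod _

theorem prod_range_add_one_eq_prod_Icc {M : Type*} [CommMonoid M] (f : ℕ → M) (i : ℕ) :
    ∏ j ∈ Finset.range i, f (j + 1) = ∏ j ∈ Finset.Icc 1 i, f j := by
  rw [← Nat.Ico_zero_eq_range, Finset.prod_Ico_add', zero_add, Finset.Ico_add_one_right_eq_Icc]

/-- The base of the digit at the `1`-based position `i + 1` of the multi-base expansion. -/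
def cyclicBase (p : ℕ → ℕ) (m i : ℕ) : ℕ := p (i % m + 1)

/-- The place value of the `1`-based position `i + 1`, i.e. `d_{w,y}` for `i + 1 = w * m + y`, as
the product of all earlier bases. -/
def placeValue (p : ℕ → ℕ) (m i : ℕ) : ℕ := ∏ j ∈ Finset.range i, cyclicBase p m j

variable (p : ℕ → ℕ) (m : ℕ)

theorem placeValue_eq_prod_Icc {i : ℕ} (hi : i ≤ m) :
    placeValue p m i = ∏ j ∈ Finset.Icc 1 i, p j := by
  rw [placeValue, ← prod_range_add_one_eq_prod_Icc]
  refine Finset.prod_congr rfl fun j hj => ?_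
  rw [cyclicBase, Nat.mod_eq_of_lt ((Finset.mem_range.1 hj).trans_le hi)]

theorem prod_Ico_cyclicBase (i : ℕ) :
    ∏ j ∈ Finset.Ico i (i + m), cyclicBase p m j = ∏ j ∈ Finset.Icc 1 m, p j := by
  simp only [cyclicBase]
  rw [← prod_range_add_one_eq_prod_Icc, ← Nat.image_Ico_mod i m,
    Finset.prod_image (Nat.mod_injOn_Ico i m)]

theorem placeValue_add_period (i : ℕ) :
    placeValue p m (i + m) = placeValue p m i * ∏ j ∈ Finset.Icc 1 m, p j := by
  rw [placeValue, placeValue, ← prod_Ico_cyclicBase p m i,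
    Finset.prod_range_mul_prod_Ico _ (Nat.le_add_right i m)]

theorem dwy_eq_placeValue (w : ℕ) {i : ℕ} (hi : i ≤ m) :
    dwy p (∏ j ∈ Finset.Icc 1 m, p j) w (i + 1) = placeValue p m (w * m + i) := by
  induction w with
  | zero => rw [dwy, bigP, pow_zero, one_mul, zero_mul, zero_add, Nat.add_sub_cancel,
      placeValue_eq_prod_Icc p m hi]
  | succ w ih =>
    rw [Nat.succ_mul, Nat.add_right_comm, placeValue_add_period, ← ih, dwy, dwy, pow_succ,
      mul_right_comm]

variable {m}

theorem digit_eq_div_placeValue_mod (hm : 0 < m) (t i : ℕ) :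
    digit p m (∏ j ∈ Finset.Icc 1 m, p j) t (i + 1) =
      t / placeValue p m i % cyclicBase p m i := by
  rw [digit, Nat.add_sub_cancel, dwy_eq_placeValue p m _ (Nat.mod_lt i hm).le, Nat.div_add_mod',
    cyclicBase]

theorem digit_eq_zero_of_dvd_div {t i k : ℕ} (hk : k < m)
    (hdvd : ∏ j ∈ Finset.Icc 1 m, p j ∣ t / placeValue p m i) :
    digit p m (∏ j ∈ Finset.Icc 1 m, p j) t (i + k + 1) = 0 := by
  have hplace : placeValue p m (i + k) =
      placeValue p m i * ∏ j ∈ Finset.Ico i (i + k), cyclicBase p m j :=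
    (Finset.prod_range_mul_prod_Ico _ (Nat.le_add_right i k)).symm
  have hbase : (∏ j ∈ Finset.Ico i (i + k), cyclicBase p m j) * cyclicBase p m (i + k) ∣
      ∏ j ∈ Finset.Icc 1 m, p j := by
    rw [← Finset.prod_Ico_succ_top (Nat.le_add_right i k), ← prod_Ico_cyclicBase p m i]
    exact Finset.prod_dvd_prod_of_subset _ _ _ (Finset.Ico_subset_Ico_right (by omega))
  rw [digit_eq_div_placeValue_mod p (by omega), hplace, ← Nat.div_div_eq_div_mul]
  exact Nat.mod_eq_zero_of_dvd (Nat.dvd_div_of_mul_dvd (hbase.trans hdvd))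

variable {p}

theorem exists_add_mul_dwy_eq (hp : ∀ i ∈ Finset.Icc 1 m, 0 < p i) {r : ℕ}
    (hr : r = ∏ j ∈ Finset.Icc 1 m, p j) (w : ℕ) {y : ℕ} (hy : y ∈ Finset.Icc 1 m) (n : ℕ) :
    ∃ t s, t + s * dwy p r w y = n ∧ s < r ∧ ∀ k < m, digit p m r t (w * m + y + k) = 0 := by
  subst hr
  obtain ⟨hy1, hym⟩ := Finset.mem_Icc.1 hy
  obtain ⟨i, rfl⟩ := Nat.exists_eq_add_of_le' hy1
  obtain ⟨t, s, hts, hs, hdvd⟩ := exists_add_mul_eq_and_dvd_div (Finset.prod_pos hp) (dwy p _ w _) n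
  refine ⟨t, s, hts, hs, fun k hk => ?_⟩
  rw [dwy_eq_placeValue p m w (by omega)] at hdvd
  rw [← add_assoc, Nat.add_right_comm]
  exact digit_eq_zero_of_dvd_div p hk hdvd

end MultiBaseExpansion

open IntermediateField in
theorem stmt_8_general {B F : Type*} [Field B] [Field F] [Algebra B F] [FiniteDimensional B F]
    {α : F} (hα : B⟮α⟯ = ⊤) {m : ℕ} {p : ℕ → ℕ} (hp : ∀ i ∈ Finset.Icc 1 m, 0 < p i)
    {r : ℕ} (hr : r = ∏ i ∈ Finset.Icc 1 m, p i) (w : ℕ) {y : ℕ} (hy : y ∈ Finset.Icc 1 m) :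
    Submodule.span B
      {x : F | ∃ t, (t < Module.finrank B F ∧ ∀ k < m, digit p m r t (w * m + y + k) = 0) ∧
        ∃ s < r, x = α ^ (t + s * dwy p r w y)} = ⊤ := by
  refine top_unique ?_
  rw [← span_pow_lt_finrank_eq_top hα]
  refine Submodule.span_mono ?_
  rintro _ ⟨n, hn, rfl⟩
  obtain ⟨t, s, hts, hs, hdigit⟩ := exists_add_mul_dwy_eq hp hr w hy n
  have ht : t < Module.finrank B F := (hts ▸ Nat.le_add_right t _).trans_lt hn
  exact ⟨t, ⟨ht, hdigit⟩, s, hs, by rw [hts]⟩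

/-- **Proposition 11.** Let `B = GF(q)`, let `p 1, …, p m` be primes
(`m ≥ 2`), `r = p 1 ⋯ p m`, `n' ≥ 2`, `l = r^{n'}`, `F = GF(q^l)`, `ζ` a primitive
element of `F`, and `u > 0` a divisor of `q - 1`.  For `w ∈ {0, …, n'-2}`,
`y ∈ {1, …, m}`, and `T_{w,y} = {t < l : digits of t at positions wm+y, …, wm+y+m-1
are all 0}`, the `l` elements `ζ^{u(t + s·d_{w,y})}`, `t ∈ T_{w,y}`,
`s ∈ {0, …, r-1}`, form a basis of `F` over `B`, i.e. their `B`-rank is `l`. -/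
theorem stmt_8 (q m : ℕ) (hm : 2 ≤ m) (p : ℕ → ℕ)
    (hp : ∀ i ∈ Finset.Icc 1 m, (p i).Prime)
    (r : ℕ) (hr : r = ∏ i ∈ Finset.Icc 1 m, p i)
    (n' : ℕ) (hn' : 2 ≤ n') (l : ℕ) (hl : l = r ^ n')
    (B F : Type*) [Field B] [Field F] [Fintype B] [Fintype F] [Algebra B F]
    (hq : Fintype.card B = q) (hrk : Module.finrank B F = l)
    (ζ : F) (hζ : orderOf ζ = q ^ l - 1)
    (u : ℕ) (hu : 0 < u) (hdvd : u ∣ q - 1)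
    (w y : ℕ) (hw : w ≤ n' - 2) (hy : y ∈ Finset.Icc 1 m) :
    Module.finrank B ↥(Submodule.span B
      {x : F | ∃ t, (t < l ∧ ∀ k < m, digit p m r t (w * m + y + k) = 0) ∧
        ∃ s < r, x = ζ ^ (u * (t + s * dwy p r w y))}) = l := by
  rw [← Nat.card_eq_fintype_card] at hq
  subst hq hrk
  rw [← Module.natCard_eq_pow_finrank] at hζ
  have huB : u ≤ Nat.card B :=
    (Nat.le_of_dvd (Nat.sub_pos_of_lt Finite.one_lt_card) hdvd).trans (Nat.sub_le _ _)
  have hspan := stmt_8_general (adjoin_primitive_pow_eq_top hζ hu huB)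
    (fun i hi => (hp i hi).pos) hr w hy
  simp only [← pow_mul] at hspan
  rw [hspan, finrank_top]
end

section
/- Let w ∈ {0, ..., n'−1} and y ∈ {1, ..., m} satisfy wm+y+m−1 ≤ n'm. Then {s·d_{w,y} : s ∈ {0, 1, ..., r̄−1}} equals the set of all a ∈ {0, ..., l−1} whose multi-base digits at every position outside {wm+y, wm+y+1, ..., wm+y+m−1} are 0. -/
/-!
The digits are those of the mixed-radix system whose bases repeat `p 1, …, p m` periodically.
In any mixed-radix system, the digits below position `j` vanish iff the weight of `j` divides the
number, and the digits from position `k` on vanish iff the number is smaller than the weight of `k`;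
so the numbers supported on positions `j, …, k - 1` are the multiples `s * weight j` with `s` below
the product of the bases at these positions. For `m` consecutive positions of the periodic system
that product is `r`.
-/

open Finset

section PeriodicProducts

variable {M : Type*} [CommMonoid M]

lemma prod_Icc_one_eq_prod_range (f : ℕ → M) (n : ℕ) :
    ∏ i ∈ Icc 1 n, f i = ∏ i ∈ range n, f (i + 1) := by
  rw [range_eq_Ico, prod_Ico_add', zero_add, Ico_add_one_right_eq_Icc]

lemma prod_Ico_add_comp_mod (f : ℕ → M) (k m : ℕ) :
    ∏ i ∈ Ico k (k + m), f (i % m) = ∏ i ∈ range m, f i := by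
  have hmod : ((Ico k (k + m)).val.map (· % m)).map f = (range m).val.map f :=
    congrArg (Multiset.map f) (Nat.multiset_Ico_map_mod k m)
  rw [Multiset.map_map] at hmod
  exact congrArg Multiset.prod hmod

lemma prod_range_mul_comp_mod (f : ℕ → M) (m n : ℕ) :
    ∏ i ∈ range (n * m), f (i % m) = (∏ i ∈ range m, f i) ^ n := by
  induction n with
  | zero => simp
  | succ n ih =>
    rw [Nat.succ_mul, ← prod_range_mul_prod_Ico _ (Nat.le_add_right _ m), ih,
      prod_Ico_add_comp_mod, pow_succ]

end PeriodicProducts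

section MixedRadix

variable {b : ℕ → ℕ} {a j k n : ℕ}

/-- The weight of position `k` (counted from `0`) in the mixed-radix numeral system with
bases `b 0, b 1, …`. -/
def radixWeight (b : ℕ → ℕ) (k : ℕ) : ℕ := ∏ i ∈ range k, b i

/-- The digit of `a` at position `k` (counted from `0`) in the mixed-radix numeral system with
bases `b 0, b 1, …`. -/
def radixDigit (b : ℕ → ℕ) (a k : ℕ) : ℕ := a / radixWeight b k % b k

lemma radixWeight_succ (b : ℕ → ℕ) (k : ℕ) :
    radixWeight b (k + 1) = radixWeight b k * b k :=
  prod_range_succ b k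

lemma radixWeight_mul_prod_Ico (b : ℕ → ℕ) (hjk : j ≤ k) :
    radixWeight b j * ∏ i ∈ Ico j k, b i = radixWeight b k :=
  prod_range_mul_prod_Ico b hjk

lemma radixWeight_pos (hb : ∀ i, 0 < b i) (k : ℕ) : 0 < radixWeight b k :=
  prod_pos fun i _ => hb i

lemma radixWeight_succ_dvd_iff :
    radixWeight b (k + 1) ∣ a ↔ radixWeight b k ∣ a ∧ radixDigit b a k = 0 := by
  rw [radixWeight_succ, radixDigit, ← Nat.dvd_iff_mod_eq_zero]
  constructor
  · exact fun h => ⟨dvd_of_mul_right_dvd h, Nat.dvd_div_of_mul_dvd h⟩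
  · exact fun ⟨hdvd, hdigit⟩ => Nat.mul_dvd_of_dvd_div hdvd hdigit

lemma radixWeight_dvd_iff : radixWeight b k ∣ a ↔ ∀ i < k, radixDigit b a i = 0 := by
  induction k with
  | zero => simp [radixWeight]
  | succ k ih => rw [radixWeight_succ_dvd_iff, ih, Nat.forall_lt_succ_right]

lemma lt_radixWeight_iff_lt_succ (hb : ∀ i, 0 < b i) :
    a < radixWeight b k ↔ a < radixWeight b (k + 1) ∧ radixDigit b a k = 0 := by
  have hpos := radixWeight_pos hb k
  have hlt_succ : a < radixWeight b (k + 1) ↔ a / radixWeight b k < b k := by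
    rw [radixWeight_succ, Nat.div_lt_iff_lt_mul hpos, mul_comm]
  rw [hlt_succ, radixDigit, ← Nat.div_eq_zero_iff_lt hpos]
  constructor
  · intro h
    simp only [h, hb k, Nat.zero_mod, and_self]
  · exact fun ⟨hlt, hdigit⟩ => Nat.mod_eq_of_lt hlt ▸ hdigit

lemma lt_radixWeight_iff (hb : ∀ i, 0 < b i) (hkn : k ≤ n) :
    a < radixWeight b k ↔
      a < radixWeight b n ∧ ∀ i, k ≤ i → i < n → radixDigit b a i = 0 := by
  induction n, hkn using Nat.le_induction with
  | base => grind
  | succ n hkn ih =>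
    rw [ih, lt_radixWeight_iff_lt_succ hb]
    grind

theorem exists_lt_prod_Ico_mul_radixWeight_iff (hb : ∀ i, 0 < b i) (hjk : j ≤ k) (hkn : k ≤ n) :
    (∃ s < ∏ i ∈ Ico j k, b i, a = s * radixWeight b j) ↔
      a < radixWeight b n ∧ ∀ i < n, i < j ∨ k ≤ i → radixDigit b a i = 0 := by
  calc (∃ s < ∏ i ∈ Ico j k, b i, a = s * radixWeight b j)
      ↔ radixWeight b j ∣ a ∧ a < radixWeight b k := by
        rw [← radixWeight_mul_prod_Ico b hjk]
        constructor
        · rintro ⟨s, hs, rfl⟩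
          rw [mul_comm s]
          exact ⟨dvd_mul_right _ _, Nat.mul_lt_mul_of_pos_left hs (radixWeight_pos hb j)⟩
        · rintro ⟨⟨s, rfl⟩, hlt⟩
          exact ⟨s, Nat.lt_of_mul_lt_mul_left hlt, mul_comm _ _⟩
    _ ↔ a < radixWeight b n ∧ ∀ i < n, i < j ∨ k ≤ i → radixDigit b a i = 0 := by
        rw [radixWeight_dvd_iff, lt_radixWeight_iff hb hkn]
        grind

end MixedRadix

section MultiBase

variable {m : ℕ}

/-- The bases of the multi-base expansion: `p 1, …, p m` repeated periodically, with positions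
counted from `0`. -/
def multiBase (p : ℕ → ℕ) (m k : ℕ) : ℕ := p (k % m + 1)

lemma multiBase_pos {p : ℕ → ℕ} (hm : 0 < m) (hp : ∀ i ∈ Icc 1 m, 0 < p i) (k : ℕ) :
    0 < multiBase p m k :=
  hp _ (mem_Icc.2 ⟨Nat.le_add_left _ _, Nat.mod_lt k hm⟩)

lemma prod_Ico_add_multiBase (p : ℕ → ℕ) (m k : ℕ) :
    ∏ i ∈ Ico k (k + m), multiBase p m i = ∏ i ∈ Icc 1 m, p i := by
  rw [prod_Icc_one_eq_prod_range]
  exact prod_Ico_add_comp_mod (fun i => p (i + 1)) k m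

lemma radixWeight_multiBase_mul (p : ℕ → ℕ) (m n : ℕ) :
    radixWeight (multiBase p m) (n * m) = (∏ i ∈ Icc 1 m, p i) ^ n := by
  rw [prod_Icc_one_eq_prod_range]
  exact prod_range_mul_comp_mod (fun i => p (i + 1)) m n

lemma radixWeight_multiBase (p : ℕ → ℕ) (w : ℕ) {x : ℕ} (hx : x < m) :
    radixWeight (multiBase p m) (w * m + x) = dwy p (∏ i ∈ Icc 1 m, p i) w (x + 1) := by
  have htail : ∏ i ∈ range x, multiBase p m (w * m + i) = bigP p (x + 1) := by
    rw [bigP, Nat.add_sub_cancel, prod_Icc_one_eq_prod_range]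
    refine prod_congr rfl fun i hi => ?_
    rw [multiBase, Nat.mul_add_mod_of_lt ((mem_range.1 hi).trans hx)]
  rw [dwy, ← radixWeight_multiBase_mul, ← htail]
  exact prod_range_add _ _ _

lemma digit_succ (p : ℕ → ℕ) (hm : 0 < m) (a k : ℕ) :
    digit p m (∏ i ∈ Icc 1 m, p i) a (k + 1) = radixDigit (multiBase p m) a k := by
  rw [digit, Nat.add_sub_cancel, ← radixWeight_multiBase p _ (Nat.mod_lt k hm), Nat.div_add_mod',
    radixDigit, multiBase]

end MultiBase

theorem stmt_9_general {m : ℕ} {p : ℕ → ℕ} (hp : ∀ i ∈ Icc 1 m, 0 < p i)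
    {r : ℕ} (hr : r = ∏ i ∈ Icc 1 m, p i) {n w y : ℕ} (hy : y ∈ Icc 1 m)
    (hpos : w * m + y + m - 1 ≤ n * m) :
    {a : ℕ | ∃ s < r, a = s * dwy p r w y}
      = {a : ℕ | a < r ^ n ∧ ∀ pos, 1 ≤ pos → pos ≤ n * m →
          (pos < w * m + y ∨ w * m + y + m ≤ pos) → digit p m r a pos = 0} := by
  obtain ⟨hy1, hym⟩ := mem_Icc.1 hy
  obtain ⟨x, rfl⟩ := Nat.exists_eq_add_of_le' hy1
  have hm : 0 < m := hy1.trans hym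
  subst hr
  ext a
  have hwindow := exists_lt_prod_Ico_mul_radixWeight_iff (a := a) (multiBase_pos hm hp)
    (Nat.le_add_right (w * m + x) m) (show w * m + x + m ≤ n * m by omega)
  rw [prod_Ico_add_multiBase, radixWeight_multiBase p w hym, radixWeight_multiBase_mul] at hwindow
  refine hwindow.trans (and_congr_right fun _ => ⟨fun h pos hpos1 hposn hout => ?_,
    fun h k hk hout => ?_⟩)
  · obtain ⟨k, rfl⟩ := Nat.exists_eq_add_of_le' hpos1
    rw [digit_succ p hm]
    exact h k hposn (by omega)
  · rw [← digit_succ p hm]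
    exact h (k + 1) (Nat.le_add_left _ _) hk (by omega)

/-- Let `p 1, …, p m` be primes (`m ≥ 2`), `r = p 1 ⋯ p m`,
`n' ≥ 2`, `l = r^{n'}`.  For `w ∈ {0, …, n'-1}` and `y ∈ {1, …, m}` with
`wm + y + m - 1 ≤ n'm`, the set `{s·d_{w,y} : 0 ≤ s ≤ r-1}` equals the set of
all `a ∈ {0, …, l-1}` whose multi-base digits at every position (in `{1,…,n'm}`)
outside `{wm+y, …, wm+y+m-1}` vanish. -/
theorem stmt_9 (m : ℕ) (hm : 2 ≤ m) (p : ℕ → ℕ)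
    (hp : ∀ i ∈ Finset.Icc 1 m, (p i).Prime)
    (r : ℕ) (hr : r = ∏ i ∈ Finset.Icc 1 m, p i)
    (n' : ℕ) (hn' : 2 ≤ n') (l : ℕ) (hl : l = r ^ n')
    (w y : ℕ) (hw : w < n') (hy : y ∈ Finset.Icc 1 m)
    (hpos : w * m + y + m - 1 ≤ n' * m) :
    {a : ℕ | ∃ s < r, a = s * dwy p r w y}
      = {a : ℕ | a < l ∧ ∀ pos, 1 ≤ pos → pos ≤ n' * m →
          (pos < w * m + y ∨ w * m + y + m ≤ pos) → digit p m r a pos = 0} :=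
  hl ▸ stmt_9_general (fun i hi => (hp i hi).pos) hr hy hpos
end

section
/- Let u be a positive divisor of q−1. For every y ∈ {1, ..., m}, rank_B({ζ^{u(t + s·d_{n'−1,y})} : t ∈ T_{n'−1,y}, s ∈ {0, ..., r̄−1}}) = l; i.e., these l field elements form a basis of F over B. -/
/-- `T_{n'-1,y}`: the `t ∈ {0,…,l-1}` whose digits at positions
`(n'-1)m+y, …, n'm` and at positions `1, …, y-1` all vanish. -/
def Ttop (p : ℕ → ℕ) (m r n' l y : ℕ) : Set ℕ :=
  {t : ℕ | t < l ∧
    (∀ pos, (n' - 1) * m + y ≤ pos → pos ≤ n' * m → digit p m r t pos = 0) ∧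
    (∀ pos, 1 ≤ pos → pos ≤ y - 1 → digit p m r t pos = 0)}

/-!
Put `d = p₁ ⋯ p_{y-1}`. A multiple of `d` below `d_{n'-1,y} = r^{n'-1} d` has all the digits
that define `T_{n'-1,y}` equal to zero, so division of `i < l` by `r^{n'-1}` writes `d i` as
`t + s d_{n'-1,y}` with `t ∈ T_{n'-1,y}` and `s < r`. Hence the given elements include the
powers `1, β, …, β^{l-1}` of `β = ζ^{u d}`, and these form a basis as soon as `β` generates `F`
over `B`. It does: a proper intermediate field has at most `q^{⌊l/2⌋}` elements, while the order
of `β` is at least `(q^l - 1) / (u d)`, and `u d ≤ q · q^{d-1} = q^d ≤ q^{⌊l/2⌋}` because `u ≤ q`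
and `2 d ≤ r ≤ l`.
-/

theorem lt_orderOf_pow {M : Type*} [Monoid M] {x : M} {a k : ℕ} (ha : 0 < a)
    (h : k * a < orderOf x) : k < orderOf (x ^ a) := by
  rw [orderOf_pow' x ha.ne', Nat.lt_div_iff_mul_lt' (Nat.gcd_dvd_left _ _)]
  calc (orderOf x).gcd a * k ≤ a * k := by gcongr; exact Nat.gcd_le_right _ ha
    _ = k * a := mul_comm a k
    _ < orderOf x := h

theorem pow_half_sub_one_mul_lt {q l a : ℕ} (hq : 1 < q) (hl : 0 < l) (ha : a ≤ q ^ (l / 2)) :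
    (q ^ (l / 2) - 1) * a < q ^ l - 1 := by
  have ha' : a ≤ q ^ (l - l / 2) := ha.trans (Nat.pow_le_pow_right (by lia) (by lia))
  have hone : 1 < q ^ (l - l / 2) := Nat.one_lt_pow (by lia) hq
  calc (q ^ (l / 2) - 1) * a ≤ (q ^ (l / 2) - 1) * q ^ (l - l / 2) := by gcongr
    _ = q ^ l - q ^ (l - l / 2) := by rw [Nat.sub_one_mul, ← pow_add, Nat.add_sub_cancel' (by lia)]
    _ < q ^ l - 1 := Nat.sub_lt_sub_left (Nat.one_lt_pow hl.ne' hq) hone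

theorem mul_le_pow_half {q u d l : ℕ} (hq : 2 ≤ q) (hu : u ≤ q) (hd : 2 * d ≤ l) :
    u * d ≤ q ^ (l / 2) := by
  rcases d with _ | e
  · simp
  · calc u * (e + 1) ≤ q * q ^ e := Nat.mul_le_mul hu (Nat.lt_pow_self hq)
      _ = q ^ (e + 1) := (pow_succ' q e).symm
      _ ≤ q ^ (l / 2) := Nat.pow_le_pow_right (by lia) (by lia)

section FieldGeneration

open IntermediateField

variable {B F : Type*} [Field B] [Field F] [Algebra B F]

theorem two_mul_finrank_le_of_ne_top [FiniteDimensional B F] {K : IntermediateField B F}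
    (hK : K ≠ ⊤) : 2 * Module.finrank B K ≤ Module.finrank B F := by
  have hindex : 2 ≤ Module.finrank K F :=
    (Nat.two_le_iff _).mpr ⟨Module.finrank_pos.ne', mt finrank_eq_one_iff_eq_top.mp hK⟩
  calc 2 * Module.finrank B K ≤ Module.finrank K F * Module.finrank B K := by gcongr
    _ = Module.finrank B F := by rw [mul_comm, Module.finrank_mul_finrank]

theorem orderOf_le_natCard_sub_one [Finite F] (x : F) : orderOf x ≤ Nat.card F - 1 := by
  have := Fintype.ofFinite F
  have hcard : 0 < Nat.card F - 1 := Nat.sub_pos_of_lt Finite.one_lt_card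
  rcases eq_or_ne x 0 with rfl | hx
  · simp
  · refine orderOf_le_of_pow_eq_one hcard ?_
    rw [Nat.card_eq_fintype_card, FiniteField.pow_card_sub_one_eq_one x hx]

theorem adjoin_eq_top_of_lt_orderOf [Finite B] [FiniteDimensional B F] {x : F}
    (hx : Nat.card B ^ (Module.finrank B F / 2) - 1 < orderOf x) : B⟮x⟯ = ⊤ := by
  by_contra hne
  have : Finite B⟮x⟯ := Module.finite_of_finite B
  have hfinrank : Module.finrank B B⟮x⟯ ≤ Module.finrank B F / 2 := by
    have := two_mul_finrank_le_of_ne_top hne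
    lia
  refine hx.not_ge ?_
  calc orderOf x = orderOf (AdjoinSimple.gen B x) :=
        orderOf_injective (B⟮x⟯.val : B⟮x⟯ →* F) Subtype.val_injective (AdjoinSimple.gen B x)
    _ ≤ Nat.card B⟮x⟯ - 1 := orderOf_le_natCard_sub_one _
    _ = Nat.card B ^ Module.finrank B B⟮x⟯ - 1 := by rw [Module.natCard_eq_pow_finrank (K := B)]
    _ ≤ Nat.card B ^ (Module.finrank B F / 2) - 1 := by
        gcongr
        exact Nat.card_pos

theorem adjoin_pow_eq_top [Finite B] [FiniteDimensional B F] {ζ : F}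
    (hζ : orderOf ζ = Nat.card B ^ Module.finrank B F - 1) {a : ℕ} (ha : 0 < a)
    (hle : a ≤ Nat.card B ^ (Module.finrank B F / 2)) : B⟮ζ ^ a⟯ = ⊤ :=
  adjoin_eq_top_of_lt_orderOf <| lt_orderOf_pow ha <|
    hζ ▸ pow_half_sub_one_mul_lt Finite.one_lt_card Module.finrank_pos hle

theorem span_pow_eq_top_of_adjoin_eq_top [FiniteDimensional B F] {β : F} (hβ : B⟮β⟯ = ⊤) :
    Submodule.span B (Set.range fun i : Fin (Module.finrank B F) => β ^ (i : ℕ)) = ⊤ := by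
  have hli := linearIndependent_pow (K := B) β
  rw [(Field.primitive_element_iff_minpoly_natDegree_eq B β).mp hβ] at hli
  exact hli.span_eq_top_of_card_eq_finrank' (Fintype.card_fin _)

end FieldGeneration

section MultiBaseDigits

variable {p : ℕ → ℕ} {m r n' y : ℕ}

theorem bigP_dvd_bigP (p : ℕ → ℕ) {a b : ℕ} (hab : a ≤ b) : bigP p a ∣ bigP p b :=
  Finset.prod_dvd_prod_of_subset _ _ _ (Finset.Icc_subset_Icc_right (Nat.sub_le_sub_right hab 1))

theorem bigP_succ (p : ℕ → ℕ) (hy : 1 ≤ y) : bigP p (y + 1) = bigP p y * p y := by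
  obtain ⟨i, rfl⟩ := Nat.exists_eq_add_of_le' hy
  exact Finset.prod_Icc_succ_top (Nat.le_add_left 1 i) p

theorem bigP_pos (hp : ∀ i ∈ Finset.Icc 1 m, 0 < p i) (hy : y ≤ m + 1) : 0 < bigP p y :=
  Finset.prod_pos fun i hi => hp i (Finset.Icc_subset_Icc_right (Nat.sub_le_of_le_add hy) hi)

theorem bigP_le_bigP (hp : ∀ i ∈ Finset.Icc 1 m, 0 < p i) {a b : ℕ} (hab : a ≤ b)
    (hb : b ≤ m + 1) : bigP p a ≤ bigP p b :=
  Nat.le_of_dvd (bigP_pos hp hb) (bigP_dvd_bigP p hab)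

theorem digit_mul_add (p : ℕ → ℕ) (r t w : ℕ) (hy1 : 1 ≤ y) (hym : y ≤ m) :
    digit p m r t (w * m + y) = t / dwy p r w y % p y := by
  obtain ⟨e, rfl⟩ := Nat.exists_eq_add_of_le' hy1
  have he : e < m := hym
  rw [digit, ← add_assoc, Nat.add_sub_cancel, Nat.mul_add_mod_of_lt he, mul_comm w m,
    Nat.mul_add_div (by lia), Nat.div_eq_of_lt he, add_zero]

theorem digit_eq_zero_of_lt_dwy {t w : ℕ} (hy1 : 1 ≤ y) (hym : y ≤ m) (ht : t < dwy p r w y) :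
    digit p m r t (w * m + y) = 0 := by
  rw [digit_mul_add p r t w hy1 hym, Nat.div_eq_of_lt ht, Nat.zero_mod]

theorem digit_eq_zero_of_bigP_succ_dvd {t : ℕ} (hy1 : 1 ≤ y) (hym : y ≤ m)
    (ht : bigP p (y + 1) ∣ t) : digit p m r t y = 0 := by
  have hdigit := digit_mul_add p r t 0 hy1 hym
  rw [zero_mul, zero_add, dwy, pow_zero, one_mul] at hdigit
  rw [hdigit, ← Nat.dvd_iff_mod_eq_zero]
  exact Nat.dvd_div_of_mul_dvd (bigP_succ p hy1 ▸ ht)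

theorem bigP_mul_mem_Ttop (hp : ∀ i ∈ Finset.Icc 1 m, 0 < p i)
    (hr : r = ∏ i ∈ Finset.Icc 1 m, p i) (hn' : 1 ≤ n') (hy1 : 1 ≤ y) (hym : y ≤ m) {c : ℕ}
    (hc : c < r ^ (n' - 1)) : bigP p y * c ∈ Ttop p m r n' (r ^ n') y := by
  have hlt {y' : ℕ} (hyy' : y ≤ y') (hy'm : y' ≤ m + 1) :
      bigP p y * c < dwy p r (n' - 1) y' := by
    calc bigP p y * c < bigP p y * r ^ (n' - 1) :=
          Nat.mul_lt_mul_of_pos_left hc (bigP_pos hp (by lia))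
      _ ≤ bigP p y' * r ^ (n' - 1) := by gcongr; exact bigP_le_bigP hp hyy' hy'm
      _ = dwy p r (n' - 1) y' := mul_comm _ _
  refine ⟨?_, fun pos hle hge => ?_, fun pos hle hge => ?_⟩
  · have hdwy : dwy p r (n' - 1) (m + 1) = r ^ n' := by
      rw [dwy, show bigP p (m + 1) = r from hr.symm, pow_sub_one_mul (by lia)]
    exact hdwy ▸ hlt (by lia) le_rfl
  · obtain ⟨y', rfl⟩ := Nat.exists_eq_add_of_le (le_of_add_le_left hle)
    have hy'm : y' ≤ m := by
      rw [← Nat.sub_add_cancel hn', add_one_mul, Nat.sub_add_cancel hn'] at hge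
      lia
    exact digit_eq_zero_of_lt_dwy (by lia) hy'm (hlt (by lia) (by lia))
  · exact digit_eq_zero_of_bigP_succ_dvd hle (by lia)
      ((bigP_dvd_bigP p (by lia)).trans (dvd_mul_right _ _))

theorem exists_mem_Ttop_add_mul_dwy (hp : ∀ i ∈ Finset.Icc 1 m, 0 < p i)
    (hr : r = ∏ i ∈ Finset.Icc 1 m, p i) (hn' : 1 ≤ n') (hy1 : 1 ≤ y) (hym : y ≤ m) {i : ℕ}
    (hi : i < r ^ n') :
    ∃ t ∈ Ttop p m r n' (r ^ n') y, ∃ s < r, bigP p y * i = t + s * dwy p r (n' - 1) y := by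
  have hr0 : 0 < r := hr ▸ Finset.prod_pos hp
  rw [← pow_sub_one_mul (by lia)] at hi
  refine ⟨bigP p y * (i % r ^ (n' - 1)),
    bigP_mul_mem_Ttop hp hr hn' hy1 hym (Nat.mod_lt _ (by positivity)),
    i / r ^ (n' - 1), Nat.div_lt_of_lt_mul hi, ?_⟩
  calc bigP p y * i
      = bigP p y * (i % r ^ (n' - 1) + r ^ (n' - 1) * (i / r ^ (n' - 1))) := by
        rw [Nat.mod_add_div]
    _ = bigP p y * (i % r ^ (n' - 1)) + i / r ^ (n' - 1) * dwy p r (n' - 1) y := by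
        rw [dwy]
        ring

theorem two_mul_bigP_le_prod (hp : ∀ i ∈ Finset.Icc 1 m, 2 ≤ p i) (hy : y ∈ Finset.Icc 1 m) :
    2 * bigP p y ≤ ∏ i ∈ Finset.Icc 1 m, p i := by
  obtain ⟨hy1, hym⟩ := Finset.mem_Icc.mp hy
  calc 2 * bigP p y ≤ p y * bigP p y := by gcongr; exact hp y hy
    _ = bigP p (y + 1) := by rw [bigP_succ p hy1, mul_comm]
    _ ≤ bigP p (m + 1) :=
        bigP_le_bigP (fun i hi => two_pos.trans_le (hp i hi)) (by lia) le_rfl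

theorem mul_bigP_le_pow_half (hp : ∀ i ∈ Finset.Icc 1 m, 2 ≤ p i)
    (hr : r = ∏ i ∈ Finset.Icc 1 m, p i) (hn' : 1 ≤ n') (hy : y ∈ Finset.Icc 1 m) {q u : ℕ}
    (hq : 2 ≤ q) (hu : u ≤ q) : u * bigP p y ≤ q ^ (r ^ n' / 2) :=
  mul_le_pow_half hq hu <|
    calc 2 * bigP p y ≤ r := hr ▸ two_mul_bigP_le_prod hp hy
      _ ≤ r ^ n' := Nat.le_self_pow (by lia) r

end MultiBaseDigits

open IntermediateField in
theorem span_pow_Ttop_eq_top {p : ℕ → ℕ} {m r n' y : ℕ} (hp : ∀ i ∈ Finset.Icc 1 m, 0 < p i)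
    (hr : r = ∏ i ∈ Finset.Icc 1 m, p i) (hn' : 1 ≤ n') (hy1 : 1 ≤ y) (hym : y ≤ m)
    {B F : Type*} [Field B] [Field F] [Algebra B F] [FiniteDimensional B F]
    (hrk : Module.finrank B F = r ^ n') {x : F} (hx : B⟮x ^ bigP p y⟯ = ⊤) :
    Submodule.span B {z : F | ∃ t ∈ Ttop p m r n' (r ^ n') y,
      ∃ s < r, z = x ^ (t + s * dwy p r (n' - 1) y)} = ⊤ := by
  refine top_le_iff.mp ((span_pow_eq_top_of_adjoin_eq_top hx).ge.trans (Submodule.span_mono ?_))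
  rintro _ ⟨i, rfl⟩
  obtain ⟨t, ht, s, hs, hts⟩ := exists_mem_Ttop_add_mul_dwy hp hr hn' hy1 hym (i.isLt.trans_eq hrk)
  exact ⟨t, ht, s, hs, by rw [← hts, pow_mul]⟩

theorem stmt_10_general {m : ℕ} {p : ℕ → ℕ} (hp : ∀ i ∈ Finset.Icc 1 m, 0 < p i)
    {r : ℕ} (hr : r = ∏ i ∈ Finset.Icc 1 m, p i)
    {n' : ℕ} (hn' : 1 ≤ n') {l : ℕ} (hl : l = r ^ n')
    {B F : Type*} [Field B] [Field F] [Finite B] [Algebra B F] [FiniteDimensional B F]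
    {q : ℕ} (hq : Nat.card B = q) (hrk : Module.finrank B F = l)
    {ζ : F} (hζ : orderOf ζ = q ^ l - 1) {y : ℕ} (hy : y ∈ Finset.Icc 1 m)
    {u : ℕ} (hu : 0 < u) (hle : u * bigP p y ≤ q ^ (l / 2)) :
    Module.finrank B ↥(Submodule.span B
      {x : F | ∃ t ∈ Ttop p m r n' l y,
        ∃ s < r, x = ζ ^ (u * (t + s * dwy p r (n' - 1) y))}) = l := by
  obtain ⟨hy1, hym⟩ := Finset.mem_Icc.mp hy
  subst q
  have hgen := adjoin_pow_eq_top (hrk ▸ hζ) (Nat.mul_pos hu (bigP_pos hp (by lia))) (hrk ▸ hle)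
  have hspan := span_pow_Ttop_eq_top hp hr hn' hy1 hym (hrk.trans hl) (pow_mul ζ u _ ▸ hgen)
  simp_rw [← pow_mul, ← hl] at hspan
  rw [hspan, finrank_top, hrk]

/-- **Proposition 12.** Let `B = GF(q)`, let `p 1, …, p m` be primes
(`m ≥ 2`), `r = p 1 ⋯ p m`, `n' ≥ 2`, `l = r^{n'}`, `F = GF(q^l)`, `ζ` a primitive
element of `F`, and `u > 0` a divisor of `q - 1`.  For every `y ∈ {1, …, m}`, the
`l` elements `ζ^{u(t + s·d_{n'-1,y})}`, `t ∈ T_{n'-1,y}`, `s ∈ {0, …, r-1}`,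
form a basis of `F` over `B`, i.e. their `B`-rank is `l`. -/
theorem stmt_10 (q m : ℕ) (hm : 2 ≤ m) (p : ℕ → ℕ)
    (hp : ∀ i ∈ Finset.Icc 1 m, (p i).Prime)
    (r : ℕ) (hr : r = ∏ i ∈ Finset.Icc 1 m, p i)
    (n' : ℕ) (hn' : 2 ≤ n') (l : ℕ) (hl : l = r ^ n')
    (B F : Type*) [Field B] [Field F] [Fintype B] [Fintype F] [Algebra B F]
    (hq : Fintype.card B = q) (hrk : Module.finrank B F = l)
    (ζ : F) (hζ : orderOf ζ = q ^ l - 1)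
    (u : ℕ) (hu : 0 < u) (hdvd : u ∣ q - 1)
    (y : ℕ) (hy : y ∈ Finset.Icc 1 m) :
    Module.finrank B ↥(Submodule.span B
      {x : F | ∃ t ∈ Ttop p m r n' l y,
        ∃ s < r, x = ζ ^ (u * (t + s * dwy p r (n' - 1) y))}) = l := by
  have hq1 : 1 < q := hq ▸ Fintype.one_lt_card
  have hle : u * bigP p y ≤ q ^ (l / 2) := hl ▸ mul_bigP_le_pow_half
    (fun i hi => (hp i hi).two_le) hr (by lia) hy hq1 ((Nat.le_of_dvd (by lia) hdvd).trans (by lia))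
  exact stmt_10_general (fun i hi => (hp i hi).pos) hr (by lia) hl
    (Nat.card_eq_fintype_card.trans hq) hrk hζ hy hu hle
end
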